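/- arXiv:2012.13471 — 2 statements merged into one kernel-verified Lean document; each statement's English description precedes it below -/
import Mathlib

section
/- Let r, s be coprime integers with 0 ≤ s < r. A positive integer n belongs to N_θ if and only if there exist rational numbers u, v, w, x, y with 0 < w ≤ n and y·v ≠ 0 such that, setting N = 2n − w, one has y² = x·(x + (r+s)w)·(x − (r−s)w), v² = u·(u − (r+s)N)·(u + (r−s)N), and x·v = u·y. -/
/-- A θ-parallelogram envelope for `n`, where `cos θ = s/r`. -/
def IsEnvelope (r s : ℤ) (n : ℕ) (a b c d e : ℚ) : Prop :=
  0 < a ∧ 0 < b ∧ 0 < c ∧ 0 < d ∧ 0 < e ∧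
  a ^ 2 + b ^ 2 - (2 * (s : ℚ) / (r : ℚ)) * a * b = c ^ 2 ∧
  a ^ 2 + d ^ 2 + (2 * (s : ℚ) / (r : ℚ)) * a * d = e ^ 2 ∧
  a * (b + d) = (r : ℚ) * (n : ℚ)

def gg (α : ℚ) : ℚ := 16 * α * (1 - α) ^ 2 / (1 + α) ^ 4

lemma val16 : padicValRat 2 (16:ℚ) = 4 := by
  have : (16:ℚ) = 2 ^ 4 := by norm_num
  rw [this, padicValRat.pow]
  have := padicValRat.self (p := 2) (by norm_num)
  push_cast at this
  rw [this]; norm_num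

lemma gg_val (α : ℚ) (h0 : 0 < α) (h1 : α ≠ 1) :
    padicValRat 2 (gg α) = 4 + padicValRat 2 α + 2 * padicValRat 2 (1 - α)
      - 4 * padicValRat 2 (1 + α) := by
  have h2 : 1 - α ≠ 0 := sub_ne_zero.mpr (Ne.symm h1)
  have h3 : 1 + α ≠ 0 := by positivity
  unfold gg
  rw [padicValRat.div (by positivity) (by positivity), padicValRat.mul (by positivity) (by positivity),
    padicValRat.mul (by positivity) (by positivity), padicValRat.pow, padicValRat.pow, val16]
  push_cast; ring

lemma val_add_pos (α : ℚ) (h3 : 1 + α ≠ 0) (h0 : α ≠ 0) (hv : 0 < padicValRat 2 α) :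
    padicValRat 2 (1 + α) = 0 := by
  have := padicValRat.add_eq_of_lt (p := 2) h3 one_ne_zero h0 (by simpa using hv)
  simpa using this

lemma val_add_neg (α : ℚ) (h3 : 1 + α ≠ 0) (h0 : α ≠ 0) (hv : padicValRat 2 α < 0) :
    padicValRat 2 (1 + α) = padicValRat 2 α := by
  have := padicValRat.add_eq_of_lt (p := 2) (q := α) (r := 1) (by rwa [add_comm]) h0 one_ne_zero (by simpa using hv)
  rwa [add_comm]

lemma gg_val_pos (α : ℚ) (h0 : 0 < α) (h1 : α ≠ 1) (hv : 0 < padicValRat 2 α) :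
    padicValRat 2 (gg α) = padicValRat 2 α + 4 := by
  rw [gg_val α h0 h1, val_add_pos α (by positivity) h0.ne' hv, sub_eq_add_neg (1:ℚ),
    val_add_pos (-α) (by rw [← sub_eq_add_neg]; exact sub_ne_zero.mpr (Ne.symm h1))
      (neg_ne_zero.mpr h0.ne') (by simpa using hv)]
  ring

lemma gg_val_neg (α : ℚ) (h0 : 0 < α) (h1 : α ≠ 1) (hv : padicValRat 2 α < 0) :
    padicValRat 2 (gg α) = 4 - padicValRat 2 α := by
  rw [gg_val α h0 h1, val_add_neg α (by positivity) h0.ne' hv, sub_eq_add_neg (1:ℚ),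
    val_add_neg (-α) (by rw [← sub_eq_add_neg]; exact sub_ne_zero.mpr (Ne.symm h1))
      (neg_ne_zero.mpr h0.ne') (by simpa using hv), padicValRat.neg]
  ring

lemma val_int_odd (p : ℤ) (hp : p % 2 = 1) : padicValRat 2 (p : ℚ) = 0 := by
  rw [padicValRat.of_int, padicValInt.eq_zero_of_not_dvd (by push_cast; omega)]; rfl

lemma val_odd_odd (α : ℚ) (h0 : 0 < α) (hv : padicValRat 2 α = 0) :
    α.num % 2 = 1 ∧ (α.den : ℤ) % 2 = 1 := by
  have hc := α.reduced
  have hn : α.num ≠ 0 := by simpa using h0.ne'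
  rw [padicValRat_def] at hv
  have e1 : ¬ (2 ∣ α.num.natAbs ∧ 2 ∣ α.den) := fun ⟨a, b⟩ => by
    have := Nat.dvd_gcd a b
    rw [hc] at this; omega
  have hnn : 2 ∣ α.num → 1 ≤ padicValInt 2 α.num := fun h => by
    have := (padicValInt_dvd_iff (p := 2) 1 α.num).mp (by simpa using h)
    tauto
  have hdd : 2 ∣ α.den → 1 ≤ padicValNat 2 α.den := fun h =>
    one_le_padicValNat_of_dvd α.den_nz h
  have hnn' : ¬ 2 ∣ α.num → padicValInt 2 α.num = 0 := fun h =>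
    padicValInt.eq_zero_of_not_dvd (by simpa using h)
  have hdd' : ¬ 2 ∣ α.den → padicValNat 2 α.den = 0 := fun h =>
    padicValNat.eq_zero_of_not_dvd h
  by_cases h1 : 2 ∣ α.num <;> by_cases h2 : 2 ∣ α.den
  · exact absurd ⟨by omega, h2⟩ e1
  · have := hnn h1; have := hdd' h2; omega
  · have := hnn' h1; have := hdd h2; omega
  · omega

lemma gg_val_zero (α : ℚ) (h0 : 0 < α) (h1 : α ≠ 1) (hv : padicValRat 2 α = 0) :
    padicValRat 2 (gg α) ≠ 0 := by
  rw [gg_val α h0 h1, hv]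
  obtain ⟨hp, hq⟩ := val_odd_odd α h0 hv
  set p := α.num with hpd
  set q : ℤ := (α.den : ℤ) with hqd
  have hα : α = p / q := by rw [hpd, hqd]; exact_mod_cast (Rat.num_div_den α).symm
  have hq0 : (q : ℚ) ≠ 0 := by rw [hqd]; exact_mod_cast α.den_nz
  obtain ⟨g, hg⟩ : ∃ g, q + p = 2 * g := ⟨(q + p) / 2, by omega⟩
  obtain ⟨h, hh⟩ : ∃ h, q - p = 2 * h := ⟨(q - p) / 2, by omega⟩
  have v2 : padicValRat 2 (2:ℚ) = 1 := by
    have := padicValRat.self (p := 2) (by norm_num)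
    push_cast at this
    exact this
  have ea : 1 + α = 2 * g / q := by
    have : ((q + p : ℤ) : ℚ) = ((2 * g : ℤ) : ℚ) := by rw [hg]
    push_cast at this
    rw [hα, ← this]; field_simp
  have eb : 1 - α = 2 * h / q := by
    have : ((q - p : ℤ) : ℚ) = ((2 * h : ℤ) : ℚ) := by rw [hh]
    push_cast at this
    rw [hα, ← this]; field_simp
  have hg0 : (g:ℚ) ≠ 0 := by
    rintro hg; rw [hg] at ea; simp at ea; linarith
  have hh0 : (h:ℚ) ≠ 0 := by
    rintro hg; rw [hg] at eb; simp at eb; exact h1 (by linarith)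
  rw [ea, eb, padicValRat.div (by positivity) hq0, padicValRat.div (by positivity) hq0,
    padicValRat.mul (by norm_num) hh0, padicValRat.mul (by norm_num) hg0, v2, val_int_odd q hq]
  rcases Int.emod_two_eq_zero_or_one g with h2 | h2
  · rw [val_int_odd h (by omega)]
    omega
  · rw [val_int_odd g h2]
    rw [padicValRat.of_int]; omega

lemma gg_ne_one (α : ℚ) (h0 : 0 < α) (h1 : α ≠ 1) : gg α ≠ 1 := by
  intro h
  have hv : padicValRat 2 (gg α) = 0 := by rw [h]; simp
  rcases lt_trichotomy (padicValRat 2 α) 0 with h2 | h2 | h2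
  · rw [gg_val_neg α h0 h1 h2] at hv; omega
  · exact gg_val_zero α h0 h1 h2 hv
  · rw [gg_val_pos α h0 h1 h2] at hv; omega

lemma gg_pos (α : ℚ) (h0 : 0 < α) (h1 : α ≠ 1) : 0 < gg α := by
  have h2 : 1 - α ≠ 0 := sub_ne_zero.mpr (Ne.symm h1)
  unfold gg; positivity

/-- rational points with nonzero `y` and positive `x` -/
def OnC (A x : ℚ) : Prop := 0 < x ∧ ∃ y : ℚ, y ≠ 0 ∧ y ^ 2 = x ^ 3 - A * x

def dbl (A x : ℚ) : ℚ := (x ^ 2 + A) ^ 2 / (4 * (x ^ 3 - A * x))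

lemma dbl_gg (A x : ℚ) (hA : 0 < A) (hx : x ^ 3 - A * x ≠ 0) :
    A / (dbl A x) ^ 2 = gg (A / x ^ 2) := by
  have hx0 : x ≠ 0 := by rintro rfl; simp at hx
  have h1 : x ^ 2 - A ≠ 0 := by
    intro h; apply hx; linear_combination x * h
  have h2 : x ^ 2 + A ≠ 0 := by positivity
  have e : x ^ 3 - A * x = x * (x ^ 2 - A) := by ring
  unfold dbl gg
  rw [e]
  have e2 : 1 + A / x ^ 2 = (x ^ 2 + A) / x ^ 2 := by field_simp
  have e3 : 1 - A / x ^ 2 = (x ^ 2 - A) / x ^ 2 := by field_simp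
  rw [e2, e3]
  field_simp
  ring

lemma dbl_on (A x y : ℚ) (hA : 0 < A) (hy : y ≠ 0) (h : y ^ 2 = x ^ 3 - A * x) :
    OnC A (dbl A x) := by
  have hx : x ^ 3 - A * x ≠ 0 := by rw [← h]; positivity
  have hx0 : x ≠ 0 := by rintro rfl; simp at hx
  have hpos : 0 < dbl A x := by
    unfold dbl; rw [← h]; positivity
  have key : ((x ^ 2 + A) * (x ^ 4 - 6 * A * x ^ 2 + A ^ 2) / (8 * y ^ 3)) ^ 2
      = dbl A x ^ 3 - A * dbl A x := by
    unfold dbl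
    rw [← h]
    field_simp
    have : y ^ 4 = (x ^ 3 - A * x) ^ 2 := by rw [← h]; ring
    try rw [this]
    ring
  refine ⟨hpos, _, ?_, key⟩
  intro h0
  rw [h0] at key
  have h1 : A / (dbl A x) ^ 2 = 1 := by
    rw [div_eq_one_iff_eq (by positivity)]
    have : dbl A x * (dbl A x ^ 2 - A) = 0 := by linear_combination -key
    rcases mul_eq_zero.mp this with h | h <;> linarith
  rw [dbl_gg A x hA hx] at h1
  refine gg_ne_one _ (by positivity) ?_ h1
  intro h2
  rw [div_eq_one_iff_eq (by positivity)] at h2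
  apply hx; rw [h2]; ring

lemma chord (A x1 x2 y1 y2 L : ℚ) (h1 : y1 ^ 2 = x1 ^ 3 - A * x1) (h2 : y2 ^ 2 = x2 ^ 3 - A * x2)
    (hne : x1 ≠ x2) (hL : L * (x1 - x2) = y1 + y2) :
    (L * ((L ^ 2 - x1 - x2) - x1) + y1) ^ 2 = (L ^ 2 - x1 - x2) ^ 3 - A * (L ^ 2 - x1 - x2) := by
  have hd : x1 - x2 ≠ 0 := sub_ne_zero.mpr hne
  have e2 : y2 = L * (x1 - x2) - y1 := by linarith
  have eA : A = x1 ^ 2 + x1 * x2 + x2 ^ 2 - (2 * y1 - L * (x1 - x2)) * L := by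
    apply mul_left_cancel₀ hd
    rw [e2] at h2
    linear_combination h1 - h2
  rw [eA] at h1 ⊢
  linear_combination h1

lemma onC_lt (A x : ℚ) (h : OnC A x) : A < x ^ 2 := by
  obtain ⟨h0, y, hy, e⟩ := h
  have : 0 < y ^ 2 := by positivity
  rw [e] at this
  have h2 : 0 < x * (x ^ 2 - A) := by linarith
  have := (mul_pos_iff_of_pos_left h0).mp h2
  linarith

lemma onC_gg (A x : ℚ) (hA : 0 < A) (h : OnC A x) :
    OnC A (dbl A x) ∧ 0 < A / x ^ 2 ∧ A / x ^ 2 ≠ 1 ∧ A / (dbl A x) ^ 2 = gg (A / x ^ 2) := by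
  have h1 := onC_lt A x h
  obtain ⟨h0, y, hy, e⟩ := h
  refine ⟨dbl_on A x y hA hy e, by positivity, ?_, dbl_gg A x hA (by rw [← e]; positivity)⟩
  intro h2
  rw [div_eq_one_iff_eq (by positivity)] at h2
  linarith

lemma onC_start (A x : ℚ) (hA : 0 < A) (h : OnC A x) :
    ∃ x', OnC A x' ∧ 0 < padicValRat 2 (A / x' ^ 2) := by
  have step : ∀ z, OnC A z → padicValRat 2 (A / z ^ 2) ≠ 0 →
      ∃ x', OnC A x' ∧ 0 < padicValRat 2 (A / x' ^ 2) := by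
    intro z hz hv
    obtain ⟨a1, a2, a3, a4⟩ := onC_gg A z hA hz
    rcases lt_or_gt_of_ne hv with h | h
    · refine ⟨_, a1, ?_⟩
      rw [a4, gg_val_neg _ a2 a3 h]; omega
    · exact ⟨z, hz, h⟩
  by_cases hv : padicValRat 2 (A / x ^ 2) = 0
  · obtain ⟨a1, a2, a3, a4⟩ := onC_gg A x hA h
    refine step _ a1 ?_
    rw [a4]; exact gg_val_zero _ a2 a3 hv
  · exact step x h hv

lemma pigeon (xs : ℕ → ℚ) (M ε : ℚ) (hε : 0 < ε) (h0 : ∀ i, 0 < xs i) (hM : ∀ i, xs i ≤ M) :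
    ∃ i j, i ≠ j ∧ |xs i - xs j| < ε := by
  have hmap : ∀ i, ⌊xs i / ε⌋ ∈ Finset.Icc (0:ℤ) ⌊M / ε⌋ := by
    intro i
    rw [Finset.mem_Icc]
    refine ⟨Int.floor_nonneg.mpr (div_nonneg (h0 i).le hε.le), Int.floor_le_floor ?_⟩
    have := hM i
    gcongr
  obtain ⟨i, j, hij, he⟩ := Finite.exists_ne_map_eq_of_infinite
    (fun i => (⟨⌊xs i / ε⌋, hmap i⟩ : Finset.Icc (0:ℤ) ⌊M / ε⌋))
  refine ⟨i, j, hij, ?_⟩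
  have he' : ⌊xs i / ε⌋ = ⌊xs j / ε⌋ := by simpa using he
  have := Int.abs_sub_lt_one_of_floor_eq_floor he'
  rw [← sub_div, abs_div, abs_of_pos hε, div_lt_one hε] at this
  exact this

theorem unbounded (A x y : ℚ) (hA : 0 < A) (hy : y ≠ 0) (h : y ^ 2 = x ^ 3 - A * x) (B : ℚ) :
    ∃ x', B < x' ∧ OnC A x' := by
  by_contra hcon
  push Not at hcon
  have hM : ∀ z, OnC A z → z ≤ B := fun z hz => by
    by_contra hlt
    exact hcon z (not_le.mp hlt) hz
  obtain ⟨x0, hx0, hv0⟩ := onC_start A _ hA (dbl_on A x y hA hy h)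
  let xs : ℕ → ℚ := fun i => (dbl A)^[i] x0
  have hxs : ∀ i, OnC A (xs i) ∧ padicValRat 2 (A / xs i ^ 2) = padicValRat 2 (A / x0 ^ 2) + 4 * i := by
    intro i
    induction i with
    | zero => exact ⟨hx0, by simp [xs]⟩
    | succ i ih =>
      obtain ⟨a1, a2, a3, a4⟩ := onC_gg A (xs i) hA ih.1
      have e : xs (i + 1) = dbl A (xs i) := Function.iterate_succ_apply' _ _ _
      rw [e]
      refine ⟨a1, ?_⟩
      rw [a4, gg_val_pos _ a2 a3 (by rw [ih.2]; positivity), ih.2]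
      push_cast; ring
  have hB : 0 < B := lt_of_lt_of_le hx0.1 (hM _ hx0)
  -- lower bound for `y`
  have hylow : ∀ z w, OnC A z → w ^ 2 = z ^ 3 - A * z → A ^ 2 ≤ 4 * B * w ^ 2 := by
    intro z w hz hw
    obtain ⟨a1, -⟩ := onC_gg A z hA hz
    have h2 := hM _ a1
    obtain ⟨h0, v, hv, e⟩ := hz
    have hw0 : 0 < w ^ 2 := by rw [hw, ← e]; positivity
    unfold dbl at h2
    rw [← hw, div_le_iff₀ (by positivity)] at h2
    nlinarith [sq_nonneg z, mul_nonneg (sq_nonneg z) hA.le, sq_nonneg (z^2)]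
  -- choose ε
  obtain ⟨i, j, hij, hd⟩ := pigeon xs B (min 1 (A ^ 2 / (12 * B ^ 2))) (by positivity)
    (fun i => (hxs i).1.1) (fun i => hM _ (hxs i).1)
  have hne : xs i ≠ xs j := by
    intro he
    have h1 := (hxs i).2
    rw [he, (hxs j).2] at h1
    omega
  have posy : ∀ z, OnC A z → ∃ w, 0 < w ∧ w ^ 2 = z ^ 3 - A * z := by
    rintro z ⟨h0, v, hv, e⟩
    exact ⟨|v|, by positivity, by rw [sq_abs, e]⟩
  obtain ⟨y1, hy1, e1⟩ := posy _ (hxs i).1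
  obtain ⟨y2, hy2, e2⟩ := posy _ (hxs j).1
  have l1 := hylow _ _ (hxs i).1 e1
  have b1 := hM _ (hxs i).1
  have b2 := hM _ (hxs j).1
  have c1 := (hxs i).1.1
  have q0 := onC_lt _ _ (hxs i).1
  generalize xs i = x1 at *
  generalize xs j = x2 at *
  have hdne : x1 - x2 ≠ 0 := sub_ne_zero.mpr hne
  have hch := chord A x1 x2 y1 y2 ((y1 + y2) / (x1 - x2)) e1 e2 hne (by field_simp)
  have hL : 3 * B < ((y1 + y2) / (x1 - x2)) ^ 2 := by
    rw [div_pow, lt_div_iff₀ (by positivity)]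
    have hd1 : |x1 - x2| < 1 := lt_of_lt_of_le hd (min_le_left _ _)
    have hd2 : |x1 - x2| < A ^ 2 / (12 * B ^ 2) := lt_of_lt_of_le hd (min_le_right _ _)
    have hsq : (x1 - x2) ^ 2 ≤ |x1 - x2| := by
      rw [← sq_abs]; nlinarith [abs_nonneg (x1 - x2)]
    have h3 : (x1 - x2) ^ 2 < A ^ 2 / (12 * B ^ 2) := lt_of_le_of_lt hsq hd2
    rw [lt_div_iff₀ (by positivity)] at h3
    have h4 : 4 * B * (3 * B * (x1 - x2) ^ 2) < 4 * B * (y1 ^ 2) := by nlinarith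
    have h5 := lt_of_mul_lt_mul_left h4 (by positivity)
    nlinarith
  generalize (y1 + y2) / (x1 - x2) = L at *
  have hbig : B < L ^ 2 - x1 - x2 := by linarith
  refine hcon _ hbig ⟨by linarith, _, ?_, hch⟩
  intro h0
  rw [h0] at hch
  set X := L ^ 2 - x1 - x2
  have hX : 0 < X := by linarith
  have : X * (X ^ 2 - A) = 0 := by linear_combination -hch
  rcases mul_eq_zero.mp this with h | h
  · linarith
  · nlinarith

def Good (K m P Q : ℚ) : Prop :=
  0 < P ∧ 0 < Q ∧ ∃ y : ℚ, y ≠ 0 ∧ 2 * P * Q * (P + Q) * (K - P * Q) = m * y ^ 2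

lemma Good.symm {K m P Q : ℚ} (h : Good K m P Q) : Good K m Q P := by
  obtain ⟨h1, h2, y, hy, e⟩ := h
  exact ⟨h2, h1, y, hy, by rw [← e]; ring⟩

lemma good_small (K m l Q : ℚ) (hK : 0 < K) (hm : 0 < m) (hl : 0 < l) (h : Good K m (l * Q) Q)
    (ε : ℚ) (hε : 0 < ε) : ∃ Q', Q' < ε ∧ Good K m (l * Q') Q' := by
  obtain ⟨-, hQ, y, hy, e⟩ := h
  obtain ⟨μ, hμ⟩ : ∃ μ, μ = 2 * l * (1 + l) * m := ⟨_, rfl⟩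
  have hμ0 : 0 < μ := by rw [hμ]; positivity
  obtain ⟨X, hX, hX0, Y, hY, eY⟩ := unbounded (l * μ ^ 2 * K) (μ * K / Q) (μ * K * m * y / Q ^ 3)
    (by positivity) (by positivity) (by
      have e2 : m ^ 2 * y ^ 2 = μ * Q ^ 3 * (K - l * Q ^ 2) := by
        rw [hμ]; linear_combination -m * e
      field_simp
      linear_combination e2) (μ * K / ε)
  refine ⟨μ * K / X, ?_, by positivity, by positivity, Y * (μ * K / X) ^ 3 / (μ * K * m),
    by positivity, ?_⟩
  · rw [div_lt_iff₀ hε] at hX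
    rw [div_lt_iff₀ hX0]; linarith
  · have : m * (Y * (μ * K / X) ^ 3 / (μ * K * m)) ^ 2
        = Y ^ 2 * (μ * K / X) ^ 6 / (μ ^ 2 * K ^ 2 * m) := by
      field_simp
    rw [this, eY]
    have h2 : 2 * (l * (μ * K / X)) * (μ * K / X) * (l * (μ * K / X) + μ * K / X) *
      (K - l * (μ * K / X) * (μ * K / X)) = μ / m * (μ * K / X) ^ 3 * (K - l * (μ * K / X) ^ 2) := by
      have : μ / m = 2 * l * (1 + l) := by rw [hμ]; field_simp
      rw [this]; ring
    rw [h2]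
    field_simp

lemma good_ne (K m P Q : ℚ) (hK : 0 < K) (hm : 0 < m) (h : Good K m P Q) :
    ∃ P Q, Q < P ∧ Good K m P Q := by
  rcases lt_trichotomy P Q with h1 | h1 | h1
  · exact ⟨Q, P, h1, h.symm⟩
  · subst h1
    obtain ⟨Q, hQ, h2⟩ := good_small K m 1 P hK hm one_pos (by simpa using h)
      (min 1 (K / 4)) (by positivity)
    have hQ1 : Q < 1 := lt_of_lt_of_le hQ (min_le_left _ _)
    have hQ2 : Q < K / 4 := lt_of_lt_of_le hQ (min_le_right _ _)
    obtain ⟨-, hQ0, y, hy, e⟩ := h2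
    have hlt : Q < (K - Q ^ 2) / (2 * Q) := by
      rw [lt_div_iff₀ (by positivity)]; nlinarith
    refine ⟨(K - Q ^ 2) / (2 * Q), Q, hlt, by linarith, hQ0, y * (K + Q ^ 2) / (4 * Q ^ 2),
      by positivity, ?_⟩
    field_simp
    linear_combination 4 * (K + Q ^ 2) ^ 2 * e
  · exact ⟨P, Q, h1, h⟩

lemma env_good (k m a b c d e : ℚ) (hk0 : 0 ≤ k) (hk1 : k < 1) (hm : 0 < m)
    (ha : 0 < a) (hc : 0 < c) (he : 0 < e)
    (h1 : a ^ 2 + b ^ 2 - 2 * k * a * b = c ^ 2) (h2 : a ^ 2 + d ^ 2 + 2 * k * a * d = e ^ 2)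
    (h3 : a * (b + d) = m) : ∃ P Q, Good (1 - k ^ 2) m P Q := by
  have hK : 0 < 1 - k ^ 2 := by nlinarith
  have hP : 0 < c - b + k * a := by
    have : (b - k * a) ^ 2 < c ^ 2 := by nlinarith [mul_pos hK (pow_pos ha 2)]
    have := abs_lt_of_sq_lt_sq this hc.le
    have := (abs_lt.mp this).2
    linarith
  have hQ : 0 < e - d - k * a := by
    have : (d + k * a) ^ 2 < e ^ 2 := by nlinarith [mul_pos hK (pow_pos ha 2)]
    have := abs_lt_of_sq_lt_sq this he.le
    have := (abs_lt.mp this).2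
    linarith
  obtain ⟨p, hp⟩ : ∃ p, p = c - b + k * a := ⟨_, rfl⟩
  obtain ⟨q, hq⟩ : ∃ q, q = e - d - k * a := ⟨_, rfl⟩
  rw [← hp] at hP
  rw [← hq] at hQ
  refine ⟨p / a, q / a, by positivity, by positivity, 2 * (p / a) * (q / a) / a, by positivity, ?_⟩
  have ec : c = p + b - k * a := by linarith
  have ee : e = q + d + k * a := by linarith
  rw [ec] at h1
  rw [ee] at h2
  have eb : 2 * p * b = (1 - k ^ 2) * a ^ 2 - p ^ 2 + 2 * k * a * p := by linear_combination -h1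
  have ed : 2 * q * d = (1 - k ^ 2) * a ^ 2 - q ^ 2 - 2 * k * a * q := by linear_combination -h2
  rw [← h3]
  field_simp
  linear_combination -q * eb - p * ed

lemma good_env (k m P Q : ℚ) (hk0 : 0 ≤ k) (hk1 : k < 1) (hm : 0 < m)
    (h : Good (1 - k ^ 2) m P Q) (hPQ : Q < P) :
    ∃ a b c d e : ℚ, 0 < a ∧ 0 < b ∧ 0 < c ∧ 0 < d ∧ 0 < e ∧ b ≤ d ∧
      a ^ 2 + b ^ 2 - 2 * k * a * b = c ^ 2 ∧ a ^ 2 + d ^ 2 + 2 * k * a * d = e ^ 2 ∧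
      a * (b + d) = m := by
  have hK : 0 < 1 - k ^ 2 := by nlinarith
  obtain ⟨K, hKd⟩ : ∃ K, K = 1 - k ^ 2 := ⟨_, rfl⟩
  rw [← hKd] at h hK
  obtain ⟨l, hl⟩ : ∃ l, l = P / Q := ⟨_, rfl⟩
  have hP := h.1
  have hQ := h.2.1
  have hl1 : 1 < l := by rw [hl, lt_div_iff₀ hQ]; linarith
  have hPl : P = l * Q := by rw [hl]; field_simp
  rw [hPl] at h
  obtain ⟨q, hq, hg⟩ := good_small K m l Q hK hm (by linarith) h
    (min (min 1 (1 - k)) (min (K / l ^ 2) (K * (l - 1) / (4 * l)))) (by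
      have : 0 < 1 - k := by linarith
      have : 0 < l - 1 := by linarith
      positivity)
  have q1 : q < 1 := lt_of_lt_of_le hq ((min_le_left _ _).trans (min_le_left _ _))
  have q2 : q < 1 - k := lt_of_lt_of_le hq ((min_le_left _ _).trans (min_le_right _ _))
  have q3 : q < K / l ^ 2 := lt_of_lt_of_le hq ((min_le_right _ _).trans (min_le_left _ _))
  have q4 : q < K * (l - 1) / (4 * l) :=
    lt_of_lt_of_le hq ((min_le_right _ _).trans (min_le_right _ _))
  rw [lt_div_iff₀ (by positivity)] at q3 q4
  obtain ⟨hp0, hq0, y0, hy0, e0⟩ := hg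
  obtain ⟨y, hy, e⟩ : ∃ y, 0 < y ∧ 2 * (l * q) * q * (l * q + q) * (K - l * q * q) = m * y ^ 2 :=
    ⟨|y0|, by positivity, by rw [sq_abs]; exact e0⟩
  obtain ⟨p, hp⟩ : ∃ p, p = l * q := ⟨_, rfl⟩
  have p1 : p ^ 2 < K := by rw [hp]; nlinarith
  have pq : 2 * k * (2 * p * q) ≤ K * (p - q) := by
    have e1 : 2 * k * (2 * p * q) = q * k * (q * (4 * l)) := by rw [hp]; ring
    have e2 : K * (p - q) = q * (K * (l - 1)) := by rw [hp]; ring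
    rw [e1, e2]
    have : k * (q * (4 * l)) ≤ q * (4 * l) := by
      have : 0 < q * (4 * l) := by positivity
      nlinarith
    nlinarith
  have hqp : q < p := by rw [hp]; nlinarith
  rw [← hp] at e hp0
  clear hq q3 q4 hp e0
  -- normalised sides
  have hb : 0 < (K - p ^ 2) / (2 * p) + k := by
    have : 0 < K - p ^ 2 := by linarith
    positivity
  have hd : 0 < (K - q ^ 2) / (2 * q) - k := by
    rw [sub_pos, lt_div_iff₀ (by positivity), hKd]
    nlinarith
  have hbd : (K - p ^ 2) / (2 * p) + k ≤ (K - q ^ 2) / (2 * q) - k := by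
    rw [← sub_nonneg]
    have : (K - q ^ 2) / (2 * q) - k - ((K - p ^ 2) / (2 * p) + k)
        = (K * (p - q) - 2 * k * (2 * p * q) + p * q * (p - q)) / (2 * p * q) := by
      field_simp; ring
    rw [this]
    apply div_nonneg _ (by positivity)
    have : 0 < p * q * (p - q) := mul_pos (by positivity) (by linarith)
    linarith
  have ha : 0 < 2 * p * q / y := by positivity
  refine ⟨2 * p * q / y, (2 * p * q / y) * ((K - p ^ 2) / (2 * p) + k),
    (2 * p * q / y) * ((K + p ^ 2) / (2 * p)),
    (2 * p * q / y) * ((K - q ^ 2) / (2 * q) - k),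
    (2 * p * q / y) * ((K + q ^ 2) / (2 * q)), ha, mul_pos ha hb, by positivity, mul_pos ha hd,
    by positivity, mul_le_mul_of_nonneg_left hbd ha.le, ?_, ?_, ?_⟩
  · generalize 2 * p * q / y = a
    have : 1 + ((K - p ^ 2) / (2 * p) + k) ^ 2 - 2 * k * ((K - p ^ 2) / (2 * p) + k)
        = ((K + p ^ 2) / (2 * p)) ^ 2 := by
      field_simp
      rw [hKd]; ring
    linear_combination a ^ 2 * this
  · generalize 2 * p * q / y = a
    have : 1 + ((K - q ^ 2) / (2 * q) - k) ^ 2 + 2 * k * ((K - q ^ 2) / (2 * q) - k)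
        = ((K + q ^ 2) / (2 * q)) ^ 2 := by
      field_simp
      rw [hKd]; ring
    linear_combination a ^ 2 * this
  · field_simp
    linear_combination e

theorem stmt_2 (r s : ℤ) (hrs : IsCoprime r s) (hs : 0 ≤ s) (hsr : s < r)
    (n : ℕ) (hn : 0 < n) :
    (∃ a b c d e : ℚ, IsEnvelope r s n a b c d e) ↔
    ∃ u v w x y : ℚ, 0 < w ∧ w ≤ (n : ℚ) ∧ y * v ≠ 0 ∧
      y ^ 2 = x * (x + ((r : ℚ) + (s : ℚ)) * w) * (x - ((r : ℚ) - (s : ℚ)) * w) ∧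
      v ^ 2 = u * (u - ((r : ℚ) + (s : ℚ)) * (2 * (n : ℚ) - w)) *
        (u + ((r : ℚ) - (s : ℚ)) * (2 * (n : ℚ) - w)) ∧
      x * v = u * y := by
  have hr0 : (0:ℚ) < r := by exact_mod_cast (lt_of_le_of_lt hs hsr)
  have hs0 : (0:ℚ) ≤ s := by exact_mod_cast hs
  have hsr' : (s:ℚ) < r := by exact_mod_cast hsr
  have hn0 : (0:ℚ) < n := by exact_mod_cast hn
  obtain ⟨k, hk⟩ : ∃ k : ℚ, k = s / r := ⟨_, rfl⟩
  have hks : (s:ℚ) = k * r := by rw [hk]; field_simp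
  have hk0 : 0 ≤ k := by rw [hk]; positivity
  have hk1 : k < 1 := by rw [hk, div_lt_one hr0]; exact hsr'
  have hK : 0 < 1 - k ^ 2 := by nlinarith
  have hk2 : 2 * (s:ℚ) / r = 2 * k := by rw [hk]; ring
  unfold IsEnvelope
  rw [hk2, hks]
  generalize (r:ℚ) = R at *
  generalize (n:ℚ) = N at *
  constructor
  · rintro ⟨a, b, c, d, e, ha, -, hc, -, he, h1, h2, h3⟩
    have hm : 0 < R * N := by positivity
    obtain ⟨P, Q, hg⟩ := env_good k (R * N) a b c d e hk0 hk1 hm ha hc he h1 h2 h3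
    obtain ⟨P, Q, hPQ, hg⟩ := good_ne _ _ _ _ hK hm hg
    clear h1 h2 h3 ha hc he a b c d e
    obtain ⟨a, b, c, d, e, ha, hb, hc, hd, he, hbd, h1, h2, h3⟩ :=
      good_env k (R * N) P Q hk0 hk1 hm hg hPQ
    have hx : 0 < a + c - k * b := by
      have : (k * b - a) ^ 2 < c ^ 2 := by nlinarith [mul_pos hK (pow_pos hb 2)]
      have := abs_lt_of_sq_lt_sq this hc.le
      have := (abs_lt.mp this).2
      linarith
    have hu : 0 < a + e + k * d := by positivity
    have hw : 2 * N - 2 * a * b / R = 2 * a * d / R := by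
      field_simp
      linear_combination -h3
    refine ⟨2 * a * (a + e + k * d), 2 * a * (2 * a * (a + e + k * d)), 2 * a * b / R,
      2 * a * (a + c - k * b), 2 * a * (2 * a * (a + c - k * b)), by positivity, ?_, by positivity,
      ?_, ?_, by ring⟩
    · rw [div_le_iff₀ hr0]
      nlinarith
    · have e1 : (R + k * R) * (2 * a * b / R) = 2 * (1 + k) * a * b := by field_simp
      have e2 : (R - k * R) * (2 * a * b / R) = 2 * (1 - k) * a * b := by field_simp
      rw [e1, e2]
      linear_combination (8 * a ^ 3 * (a + c - k * b)) * h1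
    · rw [hw]
      have e1 : (R + k * R) * (2 * a * d / R) = 2 * (1 + k) * a * d := by field_simp
      have e2 : (R - k * R) * (2 * a * d / R) = 2 * (1 - k) * a * d := by field_simp
      rw [e1, e2]
      linear_combination (8 * a ^ 3 * (a + e + k * d)) * h2
  · rintro ⟨u, v, w, x, y, hw, hwN, hyv, h1, h2, h3⟩
    have hy : y ≠ 0 := left_ne_zero_of_mul hyv
    have hv : v ≠ 0 := right_ne_zero_of_mul hyv
    have hx : x ≠ 0 := by rintro rfl; apply hy; simpa using h1
    have hu : u ≠ 0 := by rintro rfl; apply hv; simpa using h2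
    obtain ⟨a, ha⟩ : ∃ a, a = |y / (2 * x)| := ⟨_, rfl⟩
    have ha0 : 0 < a := by rw [ha]; positivity
    have hasq : 4 * a ^ 2 * x ^ 2 = y ^ 2 := by rw [ha, sq_abs]; field_simp; norm_num
    have hasq2 : 4 * a ^ 2 * u ^ 2 = v ^ 2 := by
      have hx2 : x ^ 2 ≠ 0 := by positivity
      apply mul_left_cancel₀ hx2
      linear_combination u ^ 2 * hasq - (x * v + u * y) * h3
    obtain ⟨M, hM⟩ : ∃ M, M = 2 * N - w := ⟨_, rfl⟩
    have hM0 : 0 < M := by linarith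
    rw [← hM] at h2
    have f1 : 4 * a ^ 2 * x = (x + (R + k * R) * w) * (x - (R - k * R) * w) := by
      apply mul_left_cancel₀ hx; linear_combination hasq + h1
    have f2 : 4 * a ^ 2 * u = (u - (R + k * R) * M) * (u + (R - k * R) * M) := by
      apply mul_left_cancel₀ hu; linear_combination hasq2 + h2
    have g1 : a ^ 2 + (R * w / (2 * a)) ^ 2 - 2 * k * a * (R * w / (2 * a))
        = |(4 * a ^ 2 - 2 * k * R * w - 2 * x) / (4 * a)| ^ 2 := by
      rw [sq_abs]; field_simp
      linear_combination (16:ℚ) * f1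
    have g2 : a ^ 2 + (R * M / (2 * a)) ^ 2 + 2 * k * a * (R * M / (2 * a))
        = |(4 * a ^ 2 + 2 * k * R * M - 2 * u) / (4 * a)| ^ 2 := by
      rw [sq_abs]; field_simp
      linear_combination (16:ℚ) * f2
    have pos1 : 0 < |(4 * a ^ 2 - 2 * k * R * w - 2 * x) / (4 * a)| := by
      apply lt_of_le_of_ne (abs_nonneg _)
      intro h0
      rw [← h0] at g1
      have hb : 0 < R * w / (2 * a) := by positivity
      nlinarith [mul_pos hK (pow_pos hb 2), sq_nonneg (a - k * (R * w / (2 * a)))]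
    have pos2 : 0 < |(4 * a ^ 2 + 2 * k * R * M - 2 * u) / (4 * a)| := by
      apply lt_of_le_of_ne (abs_nonneg _)
      intro h0
      rw [← h0] at g2
      have hb : 0 < R * M / (2 * a) := by positivity
      nlinarith [mul_pos hK (pow_pos hb 2), sq_nonneg (a + k * (R * M / (2 * a)))]
    refine ⟨a, R * w / (2 * a), _, R * M / (2 * a), _, ha0, by positivity, pos1, by positivity,
      pos2, g1, g2, ?_⟩
    field_simp
    rw [hM]; ring
end

section
/- Let r, s be coprime integers with 0 ≤ s < r. A positive integer n belongs to N_θ if and only if there exist rational numbers w, x, y, z with 0 < w ≤ n and y ≠ 0 such that, setting N = 2n − w, one has y² = x·(x + (r+s)w)·(x − (r−s)w) and z² = (x² + 2s(N+w)x − (r²−s²)w²)² + 4(r²−s²)N²x². -/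
lemma val_step (ξ : ℚ) (h0 : ξ ≠ 0) (h1 : ξ + 1 ≠ 0) (h2 : ξ - 1 ≠ 0) :
    padicValRat 2 ((ξ+1)^4 / (16 * ξ * (ξ-1)^2)) =
      4 * padicValRat 2 (ξ+1) - 4 - padicValRat 2 ξ - 2 * padicValRat 2 (ξ-1) := by
  have : Fact (Nat.Prime 2) := ⟨Nat.prime_two⟩
  have h16 : padicValRat 2 (16:ℚ) = 4 := by
    have : (16:ℚ) = ((2:ℕ):ℚ)^4 := by norm_num
    rw [this, padicValRat.pow, padicValRat.self (by norm_num)]; norm_num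
  rw [padicValRat.div (by positivity) (by positivity), padicValRat.mul (by positivity) (by positivity),
    padicValRat.mul (by positivity) (by positivity), padicValRat.pow, padicValRat.pow, h16]
  push_cast; ring

lemma val_neg (ξ : ℚ) (h0 : ξ ≠ 0) (h1 : ξ + 1 ≠ 0) (h2 : ξ - 1 ≠ 0)
    (h : padicValRat 2 ξ < 0) :
    padicValRat 2 ((ξ+1)^4 / (16 * ξ * (ξ-1)^2)) = padicValRat 2 ξ - 4 := by
  have : Fact (Nat.Prime 2) := ⟨Nat.prime_two⟩
  have e1 : padicValRat 2 (ξ+1) = padicValRat 2 ξ :=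
    padicValRat.add_eq_of_lt h1 h0 one_ne_zero (by simpa using h)
  have e2 : padicValRat 2 (ξ-1) = padicValRat 2 ξ := by
    rw [sub_eq_add_neg] at h2 ⊢
    exact padicValRat.add_eq_of_lt h2 h0 (by norm_num) (by simpa using h)
  rw [val_step ξ h0 h1 h2, e1, e2]; ring

lemma val_pos (ξ : ℚ) (h0 : ξ ≠ 0) (h1 : ξ + 1 ≠ 0) (h2 : ξ - 1 ≠ 0)
    (h : 0 < padicValRat 2 ξ) :
    padicValRat 2 ((ξ+1)^4 / (16 * ξ * (ξ-1)^2)) < 0 := by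
  have : Fact (Nat.Prime 2) := ⟨Nat.prime_two⟩
  have e1 : padicValRat 2 (ξ+1) = 0 := by
    have := padicValRat.add_eq_of_lt (p := 2) (q := 1) (r := ξ) (by rwa [add_comm]) one_ne_zero h0 (by simpa using h)
    rw [add_comm, this]; simp
  have e2 : padicValRat 2 (ξ-1) = 0 := by
    have := padicValRat.add_eq_of_lt (p := 2) (q := -1) (r := ξ) (by rwa [add_comm, ← sub_eq_add_neg]) (by norm_num) h0 (by simpa using h)
    rw [sub_eq_add_neg, add_comm, this]; simp
  rw [val_step ξ h0 h1 h2, e1, e2]; linarith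

lemma val_zero (ξ : ℚ) (h0 : ξ ≠ 0) (h1 : ξ + 1 ≠ 0) (h2 : ξ - 1 ≠ 0)
    (h : padicValRat 2 ξ = 0) :
    padicValRat 2 ((ξ+1)^4 / (16 * ξ * (ξ-1)^2)) ≠ 0 := by
  have : Fact (Nat.Prime 2) := ⟨Nat.prime_two⟩
  have hself : padicValRat 2 (2:ℚ) = 1 := by
    have := padicValRat.self (p := 2) (by norm_num)
    simpa using this
  have e1 : 0 ≤ padicValRat 2 (ξ-1) := by
    have := padicValRat.min_le_padicValRat_add (p := 2) (q := ξ) (r := -1) (by rwa [← sub_eq_add_neg])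
    rw [← sub_eq_add_neg] at this
    simpa [h] using this
  have e2 : min (padicValRat 2 (ξ+1)) 1 ≤ padicValRat 2 (ξ-1) := by
    have := padicValRat.min_le_padicValRat_add (p := 2) (q := ξ+1) (r := -2) (by ring_nf; ring_nf at h2; exact h2)
    rw [padicValRat.neg, hself] at this
    convert this using 2; ring
  have e3 : min (padicValRat 2 (ξ+1)) (padicValRat 2 (ξ-1)) ≤ 1 := by
    have := padicValRat.min_le_padicValRat_add (p := 2) (q := ξ+1) (r := -(ξ-1)) (by ring_nf; norm_num)
    rw [padicValRat.neg] at this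
    rwa [show ξ + 1 + -(ξ-1) = 2 by ring, hself] at this
  rw [val_step ξ h0 h1 h2, h]
  omega

/-- doubling on `y² = x³ - A x` -/
lemma dbl_s3 (A x y : ℚ) (hA : 0 < A) (hy : y ≠ 0) (h : y^2 = x^3 - A*x) :
    ∃ x' y' : ℚ, y'^2 = x'^3 - A*x' ∧ x' ≠ 0 ∧
      x'^2/A = (x^2/A+1)^4 / (16 * (x^2/A) * (x^2/A-1)^2) := by
  have hx : x ≠ 0 := by rintro rfl; apply hy; simpa using h
  have hne : x^2 - A ≠ 0 := by
    intro h'; apply hy; have : y^2 = 0 := by rw [h]; linear_combination x*h'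
    simpa using this
  have hpos : x^2 + A ≠ 0 := by positivity
  refine ⟨((x^2+A)/(2*y))^2, (3*x^2-A)/(2*y) * (x - ((x^2+A)/(2*y))^2) - y, ?_, by positivity, ?_⟩
  · have h4 : y^4 = (x^3-A*x)^2 := by rw [← h]; ring
    have h6 : y^6 = (x^3-A*x)^3 := by rw [← h]; ring
    have h8 : y^8 = (x^3-A*x)^4 := by rw [← h]; ring
    field_simp
    ring_nf
    simp only [h4, h6, h8, h]
    ring
  · have h4 : y^4 = x^2*(x^2-A)^2 := by
      have : y^4 = (y^2)^2 := by ring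
      rw [this, h]; ring
    have : (((x^2+A)/(2*y))^2)^2 = (x^2+A)^4/(16*(x^2*(x^2-A)^2)) := by
      rw [← h4]; field_simp; norm_num
    rw [this]
    field_simp

lemma seq_pts (A x y : ℚ) (hA : 0 < A) (hy : y ≠ 0) (h : y^2 = x^3 - A*x) :
    ∃ f : ℕ → ℚ × ℚ, (∀ i, (f i).2^2 = (f i).1^3 - A*(f i).1) ∧
      Function.Injective (fun i => (f i).1) := by
  have key : ∀ x y : ℚ, y ≠ 0 → y^2 = x^3 - A*x →
      x^2/A ≠ 0 ∧ x^2/A+1 ≠ 0 ∧ x^2/A-1 ≠ 0 := by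
    intro x y hy h
    have hx : x ≠ 0 := by rintro rfl; apply hy; simpa using h
    refine ⟨by positivity, by positivity, ?_⟩
    intro h'
    apply hy
    have h3 : x^2 - A = 0 := by field_simp at h'; linarith
    have : y^2 = 0 := by rw [h]; linear_combination x*h3
    simpa using this
  have ynz : ∀ x y : ℚ, x ≠ 0 → y^2 = x^3 - A*x → padicValRat 2 (x^2/A) ≠ 0 → y ≠ 0 := by
    rintro x y hx h hv rfl
    apply hv
    have h' : x * (x^2 - A) = 0 := by linear_combination -h
    have : x^2 = A := by
      rcases mul_eq_zero.1 h' with h' | h'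
      · exact absurd h' hx
      · linarith
    rw [this, div_self hA.ne']; simp
  have step : ∀ x y : ℚ, y ≠ 0 → y^2 = x^3 - A*x → padicValRat 2 (x^2/A) < 0 →
      ∃ x' y' : ℚ, y' ≠ 0 ∧ y'^2 = x'^3 - A*x' ∧ padicValRat 2 (x'^2/A) < padicValRat 2 (x^2/A) := by
    intro x y hy h hv
    obtain ⟨k0, k1, k2⟩ := key x y hy h
    obtain ⟨x', y', e, hx', hh⟩ := dbl_s3 A x y hA hy h
    have := val_neg _ k0 k1 k2 hv
    rw [← hh] at this
    exact ⟨x', y', ynz x' y' hx' e (by omega), e, by omega⟩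
  have step2 : ∀ x y : ℚ, y ≠ 0 → y^2 = x^3 - A*x → padicValRat 2 (x^2/A) ≠ 0 →
      ∃ x' y' : ℚ, y' ≠ 0 ∧ y'^2 = x'^3 - A*x' ∧ padicValRat 2 (x'^2/A) < 0 := by
    intro x y hy h hv
    rcases lt_or_gt_of_ne hv with hv | hv
    · exact ⟨x, y, hy, h, hv⟩
    obtain ⟨k0, k1, k2⟩ := key x y hy h
    obtain ⟨x', y', e, hx', hh⟩ := dbl_s3 A x y hA hy h
    have := val_pos _ k0 k1 k2 hv
    rw [← hh] at this
    exact ⟨x', y', ynz x' y' hx' e (by omega), e, by omega⟩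
  have start : ∃ x' y' : ℚ, y' ≠ 0 ∧ y'^2 = x'^3 - A*x' ∧ padicValRat 2 (x'^2/A) < 0 := by
    by_cases hv : padicValRat 2 (x^2/A) = 0
    · obtain ⟨k0, k1, k2⟩ := key x y hy h
      obtain ⟨x', y', e, hx', hh⟩ := dbl_s3 A x y hA hy h
      have := val_zero _ k0 k1 k2 hv
      rw [← hh] at this
      exact step2 x' y' (ynz x' y' hx' e this) e this
    · exact step2 x y hy h hv
  let S := {P : ℚ × ℚ // P.2 ≠ 0 ∧ P.2^2 = P.1^3 - A*P.1 ∧ padicValRat 2 (P.1^2/A) < 0}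
  have nxt : ∀ P : S, ∃ Q : S, padicValRat 2 (Q.1.1^2/A) < padicValRat 2 (P.1.1^2/A) := by
    rintro ⟨⟨x, y⟩, hy, h, hv⟩
    obtain ⟨x', y', a, b, c⟩ := step x y hy h hv
    exact ⟨⟨(x', y'), a, b, lt_trans c hv⟩, c⟩
  choose g hg using nxt
  obtain ⟨x0, y0, a, b, c⟩ := start
  let P0 : S := ⟨(x0, y0), a, b, c⟩
  let F : ℕ → S := fun i => g^[i] P0
  have hF : StrictAnti (fun i => padicValRat 2 ((F i).1.1^2/A)) := by
    apply strictAnti_nat_of_succ_lt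
    intro i
    simp only [F, Function.iterate_succ_apply']
    exact hg _
  refine ⟨fun i => (F i).1, fun i => (F i).2.2.1, ?_⟩
  intro i j hij
  apply hF.injective
  simp only at hij ⊢
  rw [hij]

lemma large_pt (A x y : ℚ) (hA : 0 < A) (hy : y ≠ 0) (h : y^2 = x^3 - A*x) (K : ℚ) :
    ∃ x' y' : ℚ, K < x' ∧ y'^2 = x'^3 - A*x' := by
  by_contra hcon
  push Not at hcon
  have hK : ∀ x y : ℚ, y^2 = x^3 - A*x → x ≤ K := by
    intro x y h
    by_contra hx
    exact hcon x y (not_le.1 hx) h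
  obtain ⟨f, hf, hinj⟩ := seq_pts A x y hA hy h
  -- bounds
  have hlow : ∀ x y : ℚ, y^2 = x^3 - A*x → -(A+1) ≤ x := by
    intro x y h
    by_contra hx
    push Not at hx
    nlinarith [sq_nonneg y, mul_pos (show 0 < -x by linarith) (show 0 < x^2 - A by nlinarith)]
  set C : ℚ := |K| + A + 1 with hC
  have hC0 : 0 < C := by positivity
  have hxC : ∀ x y : ℚ, y^2 = x^3 - A*x → |x| ≤ C := by
    intro x y h
    rw [abs_le]
    have := hK x y h
    have := hlow x y h
    have := le_abs_self K
    have := abs_nonneg K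
    constructor <;> linarith
  have hyC : ∀ x y : ℚ, y^2 = x^3 - A*x → |y| ≤ C^3 + A*C + 1 := by
    intro x y h
    have h1 := hxC x y h
    have h2 : x^3 ≤ C^3 := by
      calc x^3 ≤ |x^3| := le_abs_self _
        _ = |x|^3 := abs_pow _ _
        _ ≤ C^3 := by gcongr
    have h3 : -(A*x) ≤ A*C := by
      have := neg_abs_le x
      nlinarith
    have h4 : |y|^2 ≤ C^3 + A*C := by rw [sq_abs]; linarith
    nlinarith [abs_nonneg y, sq_nonneg (|y| - 1)]
  let G : ℕ → ℝ × ℝ := fun i => (((f i).1 : ℝ), ((f i).2 : ℝ))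
  obtain ⟨L, -, φ, hφ, hlim⟩ := (isCompact_Icc (a := ((-(C:ℝ), -((C^3+A*C+1 : ℚ):ℝ)) : ℝ × ℝ))
    (b := ((C:ℝ), ((C^3+A*C+1 : ℚ):ℝ)))).tendsto_subseq (x := G) (by
      intro i
      have h1 := abs_le.1 (hxC _ _ (hf i))
      have h2 := abs_le.1 (hyC _ _ (hf i))
      refine ⟨⟨?_, ?_⟩, ⟨?_, ?_⟩⟩ <;> simp only [G]
      · exact_mod_cast h1.1
      · exact_mod_cast h2.1
      · exact_mod_cast h1.2
      · exact_mod_cast h2.2)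
  obtain ⟨X, Y⟩ := L
  let a : ℕ → ℝ := fun i => ((f (φ i)).1 : ℝ)
  let b : ℕ → ℝ := fun i => ((f (φ i)).2 : ℝ)
  have ha : Filter.Tendsto a Filter.atTop (nhds X) := (continuous_fst.tendsto _).comp hlim
  have hb : Filter.Tendsto b Filter.atTop (nhds Y) := (continuous_snd.tendsto _).comp hlim
  have ha' := ha.comp (Filter.tendsto_add_atTop_nat 1)
  have hb' := hb.comp (Filter.tendsto_add_atTop_nat 1)
  have hab : ∀ i, b i ^ 2 = a i ^ 3 - A * a i := by
    intro i; simp only [a, b]; exact_mod_cast hf (φ i)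
  have hXY : Y^2 = X^3 - A*X := by
    have h1 : Filter.Tendsto (fun i => b i ^2) Filter.atTop (nhds (Y^2)) := hb.pow 2
    have h2 : Filter.Tendsto (fun i => a i ^3 - A * a i) Filter.atTop (nhds (X^3 - A*X)) :=
      (ha.pow 3).sub (ha.const_mul _)
    simp only [hab] at h1
    exact tendsto_nhds_unique h1 h2
  -- slope bound
  have slope : ∀ i, ∃ l : ℝ, |l| ≤ 3*C+1 ∧ b i + b (i+1) = l * (a i - a (i+1)) ∧
      a i^2 + a i * a (i+1) + a (i+1)^2 - A = l * (b i - b (i+1)) := by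
    intro i
    set x1 := (f (φ i)).1 with hx1
    set y1 := (f (φ i)).2 with hy1
    set x2 := (f (φ (i+1))).1 with hx2
    set y2 := (f (φ (i+1))).2 with hy2
    have e1 : y1^2 = x1^3 - A*x1 := hf _
    have e2 : y2^2 = x2^3 - A*x2 := hf _
    have hne : x1 - x2 ≠ 0 := by
      intro h0
      have := hφ.injective (hinj (sub_eq_zero.1 h0 : x1 = x2))
      omega
    obtain ⟨l, hl⟩ : ∃ l : ℚ, l * (x1 - x2) = y1 + y2 := ⟨(y1+y2)/(x1-x2), by field_simp⟩
    have hl2 : x1^2 + x1*x2 + x2^2 - A = l * (y1 - y2) := by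
      apply mul_left_cancel₀ hne
      linear_combination (y2 - y1) * hl - e1 + e2
    have pt : (l * (x1 - (l^2 - x1 - x2)) - y1)^2 = (l^2-x1-x2)^3 - A*(l^2-x1-x2) := by
      apply mul_left_cancel₀ hne
      have hy2' : y2 = l*(x1-x2) - y1 := by linarith
      rw [hy2'] at hl2 e2
      have hA' : A = x1^2+x1*x2+x2^2 - l*(y1 - (l*(x1-x2) - y1)) := by linarith
      have e1' := e1
      rw [hA'] at e1' ⊢
      linear_combination (x1-x2) * e1'
    have hb1 := hK _ _ pt
    have q1 := (abs_le.1 (hxC _ _ e1)).2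
    have q2 := (abs_le.1 (hxC _ _ e2)).2
    have q3 : K ≤ C := by have := le_abs_self K; linarith
    have hlb : |l| ≤ 3*C+1 := by
      have : |l|^2 ≤ 3*C := by rw [sq_abs]; linarith
      nlinarith [abs_nonneg l, sq_nonneg (|l|-1)]
    refine ⟨l, by exact_mod_cast hlb, ?_, ?_⟩
    · simp only [a, b]; exact_mod_cast hl.symm
    · simp only [a, b]; exact_mod_cast hl2
  have lim0 : ∀ (u v : ℕ → ℝ) (U : ℝ), Filter.Tendsto u Filter.atTop (nhds U) →
      Filter.Tendsto v Filter.atTop (nhds 0) → (∀ i, |u i| ≤ (3*C+1) * |v i|) → U = 0 := by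
    intro u v U hu hv hle
    have h1 : Filter.Tendsto (fun i => ((3*C+1:ℝ)) * |v i|) Filter.atTop (nhds 0) := by
      simpa using hv.abs.const_mul (3*C+1:ℝ)
    have h2 := squeeze_zero_norm (f := u) hle h1
    exact tendsto_nhds_unique hu h2
  have hY : Y + Y = 0 := by
    refine lim0 (fun i => b i + b (i+1)) (fun i => a i - a (i+1)) _ (hb.add hb') ?_ ?_
    · simpa using ha.sub ha'
    · intro i
      obtain ⟨l, h1, h2, -⟩ := slope i
      rw [h2, abs_mul]
      gcongr
  have hX : X^2 + X*X + X^2 - A = 0 := by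
    refine lim0 (fun i => a i^2 + a i * a (i+1) + a (i+1)^2 - A) (fun i => b i - b (i+1)) _
      ((((ha.pow 2).add (ha.mul ha')).add (ha'.pow 2)).sub_const _) ?_ ?_
    · simpa using hb.sub hb'
    · intro i
      obtain ⟨l, h1, -, h2⟩ := slope i
      rw [h2, abs_mul]
      gcongr
  have hY0 : Y = 0 := by linarith
  have hA' : (0:ℝ) < A := by exact_mod_cast hA
  have hAX : (A:ℝ) = 3*X^2 := by linarith
  rw [hY0, hAX] at hXY
  have : X^3 = 0 := by linarith
  have : X = 0 := by simpa using this
  rw [this] at hAX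
  norm_num at hAX
  exact hA.ne' hAX

/-- Scaling along a ray. -/
lemma ray (H M p q w : ℚ) (hH : 0 < H) (hM : 0 < M) (hp : 0 < p) (hq : 0 < q) (hw : w ≠ 0)
    (h : w^2 = M*p*q*(p+q)*(p*q-H)) (K : ℚ) :
    ∃ m w' : ℚ, 0 < m ∧ K < m ∧ H < (m*p)*(m*q) ∧ w' ≠ 0 ∧
      w'^2 = M*(m*p)*(m*q)*(m*p+m*q)*((m*p)*(m*q)-H) := by
  -- x = M p²q²(p+q) m
  set c := M*p^2*q^2*(p+q) with hc
  have hc0 : 0 < c := by positivity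
  set A := M^2*(p*q)^3*(p+q)^2*H with hA
  have hA0 : 0 < A := by positivity
  obtain ⟨x, y, hx, hxy⟩ := large_pt A c (M*p*q*(p+q)*w*p*q) hA0 (by positivity)
    (by rw [mul_pow, mul_pow, mul_pow _ w, h, hc, hA]; ring)
    (c * (|K| + 1 + H/(p*q)))
  have hm : |K| + 1 + H/(p*q) < x/c := by rw [lt_div_iff₀ hc0]; linarith
  have hHp : 0 < H/(p*q) := by positivity
  have hm1 : 1 < x/c := by have := abs_nonneg K; linarith
  have hbig : H < (x/c*p)*(x/c*q) := by
    have h1 : H/(p*q) < x/c := by have := abs_nonneg K; linarith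
    have h2 : H/(p*q) < (x/c)*(x/c) := by nlinarith
    rw [div_lt_iff₀ (by positivity)] at h2
    linarith
  have hm0 : 0 < x/c := by linarith
  have heq : (y*(x/c)/c)^2 = M*(x/c*p)*(x/c*q)*(x/c*p+x/c*q)*((x/c*p)*(x/c*q)-H) := by
    rw [div_pow, mul_pow, hxy, hc, hA]
    field_simp
  refine ⟨x/c, y*(x/c)/c, hm0, ?_, hbig, ?_, heq⟩
  · have := le_abs_self K; linarith
  · intro h0
    rw [h0] at heq
    have : 0 < M*(x/c*p)*(x/c*q)*(x/c*p+x/c*q)*((x/c*p)*(x/c*q)-H) := by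
      have : 0 < (x/c*p)*(x/c*q)-H := by linarith
      positivity
    rw [← heq] at this; norm_num at this

lemma far_lt (H M p q w : ℚ) (hH : 0 < H) (hM : 0 < M) (hp : 0 < p) (hpq : p < q) (hw : w ≠ 0)
    (h : w^2 = M*p*q*(p+q)*(p*q-H)) (K : ℚ) :
    ∃ p' q' w' : ℚ, 0 < p' ∧ K < p' ∧ K < q' - p' ∧ H < p' * q' ∧ w' ≠ 0 ∧
      w'^2 = M*p'*q'*(p'+q')*(p'*q'-H) := by
  have hq : 0 < q := by linarith
  have hd : 0 < q - p := by linarith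
  obtain ⟨m, w', m0, mK, mH, w0, hw'⟩ := ray H M p q w hH hM hp hq hw h (max (K/p) (K/(q-p)))
  have h1 := lt_of_le_of_lt (le_max_left _ _) mK
  have h2 := lt_of_le_of_lt (le_max_right _ _) mK
  rw [div_lt_iff₀ (by assumption)] at h1 h2
  exact ⟨m*p, m*q, w', by positivity, h1, by linarith, mH, w0, hw'⟩

lemma far_ne (H M p q w : ℚ) (hH : 0 < H) (hM : 0 < M) (hp : 0 < p) (hq : 0 < q) (hpq : p ≠ q)
    (hw : w ≠ 0) (h : w^2 = M*p*q*(p+q)*(p*q-H)) (K : ℚ) :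
    ∃ p' q' w' : ℚ, 0 < p' ∧ K < p' ∧ K < q' - p' ∧ H < p' * q' ∧ w' ≠ 0 ∧
      w'^2 = M*p'*q'*(p'+q')*(p'*q'-H) := by
  rcases lt_or_gt_of_ne hpq with hlt | hlt
  · exact far_lt H M p q w hH hM hp hlt hw h K
  · exact far_lt H M q p w hH hM hq hlt hw (by rw [h]; ring) K

lemma far (H M p q w : ℚ) (hH : 0 < H) (hM : 0 < M) (hp : 0 < p) (hq : 0 < q)
    (hw : w ≠ 0) (h : w^2 = M*p*q*(p+q)*(p*q-H)) (K : ℚ) :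
    ∃ p' q' w' : ℚ, 0 < p' ∧ K < p' ∧ K < q' - p' ∧ H < p' * q' ∧ w' ≠ 0 ∧
      w'^2 = M*p'*q'*(p'+q')*(p'*q'-H) := by
  by_cases hpq : p = q
  · subst hpq
    obtain ⟨m, w1, m0, mK, mH, w0, hw1⟩ := ray H M p p w hH hM hp hp hw h ((1+3*H)/p)
    rw [div_lt_iff₀ hp] at mK
    set P := m*p with hP
    have hP0 : 0 < P := by positivity
    have hd : 0 < P^2 - H := by nlinarith
    have hd3 : 0 < P^2 - 3*H := by nlinarith
    refine far_ne H M P (2*P*H/(P^2-H)) (w1*(H*(P^2+H)/(P^2-H)^2)) hH hM hP0 (by positivity) ?_ (by positivity) ?_ K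
    · intro he
      rw [eq_div_iff hd.ne'] at he
      have : P * (P^2 - 3*H) = 0 := by linarith
      have : 0 < P * (P^2 - 3*H) := by positivity
      linarith
    · have e : (w1*(H*(P^2+H)/(P^2-H)^2))^2 = w1^2*(H*(P^2+H)/(P^2-H)^2)^2 := by ring
      rw [e, hw1]
      field_simp
      ring
  · exact far_ne H M p q w hH hM hp hq hpq hw h K

lemma env_small (r s : ℤ) (hs : 0 ≤ s) (hsr : s < r) (n : ℕ) (hn : 0 < n)
    (a b c d e : ℚ) (henv : IsEnvelope r s n a b c d e) :
    ∃ a b c d e : ℚ, IsEnvelope r s n a b c d e ∧ b ≤ d := by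
  obtain ⟨ha, hb, hc, hd, he, h1, h2, h3⟩ := henv
  have hs' : (0:ℚ) ≤ s := by exact_mod_cast hs
  have hsr' : (s:ℚ) < r := by exact_mod_cast hsr
  have hr : (0:ℚ) < r := by linarith
  have hn' : (0:ℚ) < n := by exact_mod_cast hn
  unfold IsEnvelope
  rw [show 2 * (s:ℚ) / r = 2 * ((s:ℚ)/r) by ring] at h1 h2 ⊢
  have hk0 : (0:ℚ) ≤ (s:ℚ)/r := by positivity
  have hk1 : (s:ℚ)/r < 1 := by rw [div_lt_one hr]; exact hsr'
  generalize (s:ℚ)/r = k at *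
  have hT : (0:ℚ) < r * n := by positivity
  generalize (r:ℚ) * n = T at *
  have hH : 0 < 1 - k^2 := by nlinarith
  set H := 1 - k^2 with hHdef
  -- the initial parameters
  have hX : 0 < b - k*a + c := by
    have : (k*a-b)^2 < c^2 := by rw [← h1]; nlinarith [mul_pos ha ha, mul_pos hH (mul_pos ha ha)]
    have := (abs_lt_of_sq_lt_sq this hc.le)
    have := (abs_lt.1 this).2
    linarith
  have hY : 0 < d + k*a + e := by positivity
  set p := (b - k*a + c)/a with hp
  set q := (d + k*a + e)/a with hq
  have hp0 : 0 < p := by positivity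
  have hq0 : 0 < q := by positivity
  have ep : p^2 - H = 2*p*((b-k*a)/a) := by
    rw [hp, hHdef]; field_simp; linear_combination -h1
  have eq' : q^2 - H = 2*q*((d+k*a)/a) := by
    rw [hq, hHdef]; field_simp; linear_combination -h2
  have hD : (b-k*a)/a + (d+k*a)/a = T/a^2 := by
    field_simp; linear_combination h3
  have hpq : (p+q)*(p*q-H) = 2*p*q*(T/a^2) := by
    rw [← hD]; linear_combination q*ep + p*eq'
  obtain ⟨P, Q, w, P0, PK, QK, PH, w0, hw⟩ := far H (2*T) p q (2*p*q*T/a) hH (by positivity) hp0 hq0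
    (by positivity) (by
      rw [mul_assoc (2*T*p*q), hpq]; field_simp) 4
  have Q0 : 0 < Q := by linarith
  have hH1 : H ≤ 1 := by rw [hHdef]; nlinarith
  have hu : 0 < (P - H/P)/2 := by
    have : H/P < P := by rw [div_lt_iff₀ P0]; nlinarith
    linarith
  have hv : (P - H/P)/2 + 2*k ≤ (Q - H/Q)/2 := by
    have : H/Q ≤ H/P := by apply div_le_div_of_nonneg_left hH.le P0; linarith
    linarith
  set u := (P - H/P)/2 with hudef
  set v := (Q - H/Q)/2 with hvdef
  have hg : u^2 + H = ((P + H/P)/2)^2 := by rw [hudef]; field_simp; ring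
  have hg' : v^2 + H = ((Q + H/Q)/2)^2 := by rw [hvdef]; field_simp; ring
  set g := (P + H/P)/2 with hgdef
  set g' := (Q + H/Q)/2 with hgdef'
  have g0 : 0 < g := by positivity
  have g0' : 0 < g' := by positivity
  have hw2 : w^2 = 4*T*P^2*Q^2*(u+v) := by rw [hw, hudef, hvdef]; field_simp; ring
  have huv : 0 < u + v := by linarith
  set α := 2*T*P*Q/|w| with hα
  have α0 : 0 < α := by positivity
  have hα2 : α^2*(u+v) = T := by
    rw [hα, div_pow, sq_abs, hw2]; field_simp; norm_num
  refine ⟨α, α*(u+k), α*g, α*(v-k), α*g', ⟨α0, by positivity, by positivity, ?_, by positivity, ?_, ?_, ?_⟩, ?_⟩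
  · apply mul_pos α0; linarith
  · rw [mul_pow α g, ← hg, hHdef]; ring
  · rw [mul_pow α g', ← hg', hHdef]; ring
  · linear_combination hα2
  · apply mul_le_mul_of_nonneg_left _ α0.le; linarith

theorem stmt_3 (r s : ℤ) (hrs : IsCoprime r s) (hs : 0 ≤ s) (hsr : s < r)
    (n : ℕ) (hn : 0 < n) :
    (∃ a b c d e : ℚ, IsEnvelope r s n a b c d e) ↔
    ∃ w x y z : ℚ, 0 < w ∧ w ≤ (n : ℚ) ∧ y ≠ 0 ∧
      y ^ 2 = x * (x + ((r : ℚ) + (s : ℚ)) * w) * (x - ((r : ℚ) - (s : ℚ)) * w) ∧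
      z ^ 2 = (x ^ 2 + 2 * (s : ℚ) * ((2 * (n : ℚ) - w) + w) * x -
          ((r : ℚ) ^ 2 - (s : ℚ) ^ 2) * w ^ 2) ^ 2 +
        4 * ((r : ℚ) ^ 2 - (s : ℚ) ^ 2) * (2 * (n : ℚ) - w) ^ 2 * x ^ 2 := by
  have hs' : (0:ℚ) ≤ s := by exact_mod_cast hs
  have hsr' : (s:ℚ) < r := by exact_mod_cast hsr
  have hr : (0:ℚ) < r := by linarith
  have hn' : (0:ℚ) < n := by exact_mod_cast hn
  have hH : (0:ℚ) < (r:ℚ)^2 - (s:ℚ)^2 := by nlinarith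
  constructor
  · rintro ⟨a, b, c, d, e, henv⟩
    obtain ⟨a, b, c, d, e, ⟨ha, hb, hc, hd, he, h1, h2, h3⟩, hbd⟩ :=
      env_small r s hs hsr n hn a b c d e henv
    clear henv
    have hk : ∃ k : ℚ, (s:ℚ) = r * k := ⟨s/r, by field_simp⟩
    obtain ⟨k, hk⟩ := hk
    rw [hk] at hH h1 h2 ⊢
    rw [show 2 * ((r:ℚ)*k)/r = 2*k by field_simp] at h1 h2
    have hH' : 0 < 1 - k^2 := by
      by_contra hcon
      push Not at hcon
      nlinarith [mul_pos hr hr]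
    have hx : 0 < a - k*b + c := by
      have : (k*b-a)^2 < c^2 := by rw [← h1]; nlinarith [mul_pos hH' (mul_pos hb hb)]
      have := (abs_lt.1 (abs_lt_of_sq_lt_sq this hc.le)).2
      linarith
    have hN : (n:ℚ) = a*(b+d)/r := by field_simp; linarith
    have hc2 : c^2 = a^2+b^2-2*k*a*b := h1.symm
    have hD : (2 * (n:ℚ) - 2*a*b/r) = 2*a*d/r := by rw [hN]; field_simp; ring
    have hxx : (2*a*(a-k*b+c))^2 + 2*(r*k)*(2*a*b/r)*(2*a*(a-k*b+c)) - ((r:ℚ)^2-(r*k)^2)*(2*a*b/r)^2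
        = 4*a^2*(2*a*(a-k*b+c)) := by
      field_simp
      linear_combination 2*hc2
    refine ⟨2*a*b/r, 2*a*(a-k*b+c), 2*a*(2*a*(a-k*b+c)), 2*e*(2*a*(2*a*(a-k*b+c))), by positivity, ?_, by positivity, ?_, ?_⟩
    · rw [hN]; gcongr ?_ / _; nlinarith
    · linear_combination (-(2*a*(a-k*b+c)))*hxx
    · rw [hD]
      set x := 2*a*(a-k*b+c)
      have : x^2 + 2*(r*k)*(2*a*d/r + 2*a*b/r)*x - ((r:ℚ)^2-(r*k)^2)*(2*a*b/r)^2 = 4*a^2*x + 4*k*a*d*x := by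
        rw [← hxx]; field_simp; ring
      rw [this, mul_pow, mul_pow 2 e, ← h2]
      field_simp
      ring
  · rintro ⟨w, x, y, z, hw, hwn, hy, hxy, hz⟩
    have hx : x ≠ 0 := by rintro rfl; apply hy; simpa using hxy
    have hN : 0 < 2 * (n:ℚ) - w := by linarith
    have hz0 : z ≠ 0 := by
      rintro rfl
      have : 0 < 4 * ((r : ℚ) ^ 2 - (s : ℚ) ^ 2) * (2 * (n : ℚ) - w) ^ 2 * x ^ 2 := by positivity
      nlinarith [sq_nonneg (x ^ 2 + 2 * (s : ℚ) * ((2 * (n : ℚ) - w) + w) * x -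
          ((r : ℚ) ^ 2 - (s : ℚ) ^ 2) * w ^ 2)]
    set a := |y/(2*x)| with hadef
    have ha : 0 < a := by positivity
    have ha2 : 4*a^2*x^2 = y^2 := by rw [hadef, sq_abs]; field_simp; norm_num
    clear_value a
    have hax : 4*a^2*x = (x + ((r : ℚ) + (s : ℚ)) * w) * (x - ((r : ℚ) - (s : ℚ)) * w) := by
      apply mul_left_cancel₀ hx; linear_combination ha2 + hxy
    refine ⟨a, r*w/(2*a), |(x^2 + ((r:ℚ)^2-(s:ℚ)^2)*w^2)/(2*y)|, r*(2*n-w)/(2*a), |z/(2*y)|,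
      ha, by positivity, ?_, by positivity, by positivity, ?_, ?_, ?_⟩
    · have : x^2 + ((r:ℚ)^2-(s:ℚ)^2)*w^2 ≠ 0 := by positivity
      positivity
    · have e2 : |(x^2 + ((r:ℚ)^2-(s:ℚ)^2)*w^2)/(2*y)|^2
          = (x^2 + ((r:ℚ)^2-(s:ℚ)^2)*w^2)^2/(16*a^2*x^2) := by
        rw [sq_abs, div_pow, mul_pow, ← ha2]; ring
      rw [e2]
      field_simp
      linear_combination 4*(4*a^2*x + (x + ((r : ℚ) + (s : ℚ)) * w) * (x - ((r : ℚ) - (s : ℚ)) * w) - 4*s*w*x) * hax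
    · have e2 : |z/(2*y)|^2 = z^2/(16*a^2*x^2) := by
        rw [sq_abs, div_pow, mul_pow, ← ha2]; ring
      rw [e2, hz]
      field_simp
      linear_combination 4*(4*a^2*x + (x + ((r : ℚ) + (s : ℚ)) * w) * (x - ((r : ℚ) - (s : ℚ)) * w) + 4*s*(2*n-w)*x) * hax
    · field_simp; ring
end
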